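/- arXiv:2307.13543 — 2 statements merged into one kernel-verified Lean document; each statement's English description precedes it below -/
import Mathlib

section
/- Let Z ⊆ Σ^ℤ be a sofic shift, A : Z → ℝ^{n×n}, and fix γ ∈ [0,1). The following are equivalent: (1) for every γ̃ ∈ (γ, 1), the linear system x(k+1) = A(σ^k(z)) x(k) is uniformly exponentially stable with decay rate γ̃; (2) for every γ̃ ∈ (γ, 1) there exist constants M₁, M₂ > 0 and a map Q : Z → S^n_+ into the symmetric positive definite n×n matrices such that M₁ I_n ⪯ Q(z) ⪯ M₂ I_n for all z ∈ Z, and A(z)ᵀ Q(σ(z)) A(z) ≺ γ̃² Q(z) for all z ∈ Z. -/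
open Set Filter Matrix

section Defs

variable {A : Type*}

/-- The shift map on bi-infinite sequences over the alphabet `A`. -/
def shiftMap (z : ℤ → A) : ℤ → A := fun k => z (k + 1)

/-- `s` is a bi-infinite walk, labeled by `z`, in the labeled graph with edge set `E`. -/
def IsLabeledWalk {S : Type*} (E : Set (S × S × A)) (z : ℤ → A) (s : ℤ → S) : Prop :=
  ∀ k : ℤ, (s k, s (k + 1), z k) ∈ E

/-- `Z(G)`: the set of labels of bi-infinite walks of the graph with edge set `E`. -/
def graphLang {S : Type*} (E : Set (S × S × A)) : Set (ℤ → A) :=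
  {z | ∃ s : ℤ → S, IsLabeledWalk E z s}

/-- `Z(G, s₀)`: the set of labels of bi-infinite walks starting (at time `0`) at node `s₀`. -/
def graphLangAt {S : Type*} (E : Set (S × S × A)) (s0 : S) : Set (ℤ → A) :=
  {z | ∃ s : ℤ → S, IsLabeledWalk E z s ∧ s 0 = s0}

/-- A set `Z` of bi-infinite sequences is a sofic shift if it is the set of labels of
bi-infinite walks of some finite labeled graph. -/
def IsSofic (Z : Set (ℤ → A)) : Prop :=
  ∃ (S : Type) (_ : Fintype S) (E : Set (S × S × A)), Z = graphLang E

/-- The graph with node set `Fin K` and edge set `E` is a presentation of the indexed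
covering `C` of `Z`: `Z = Z(G)` and `C j = Z(G, j)` for every node `j`. -/
def IsPresentation {K : ℕ} (E : Set (Fin K × Fin K × A)) (C : Fin K → Set (ℤ → A))
    (Z : Set (ℤ → A)) : Prop :=
  Z = graphLang E ∧ ∀ j : Fin K, C j = graphLangAt E j

/-- `C` is a graph-induced covering of `Z`. -/
def IsGCovering {K : ℕ} (C : Fin K → Set (ℤ → A)) (Z : Set (ℤ → A)) : Prop :=
  ∃ E : Set (Fin K × Fin K × A), IsPresentation E C Z

/-- The forward one-sided sequence `z⁺ = (z 0, z 1, …)`. -/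
def postSeq (z : ℤ → A) : ℕ → A := fun m => z m

/-- The backward one-sided sequence `z⁻ = (…, z (-2), z (-1))`, encoded so that index
`m` holds `z (-(m+1))` (index `0` is `z (-1)`). -/
def preSeq (z : ℤ → A) : ℕ → A := fun m => z (-(m + 1))

/-- Concatenation of a letter with a set of one-sided sequences: for forward sequences this
is `i · B`; for backward sequences (with the encoding of `preSeq`) this is `B · i`. -/
def consSeq (i : A) (B : Set (ℕ → A)) : Set (ℕ → A) :=
  {w | w 0 = i ∧ (fun m => w (m + 1)) ∈ B}

/-- Time inversion of a bi-infinite sequence: `z⁻¹ k = z (-1-k)`. -/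
def timeInv (z : ℤ → A) : ℤ → A := fun k => z (-1 - k)

/-- The transpose graph: edges are reversed, labels kept. -/
def transposeE {S : Type*} (E : Set (S × S × A)) : Set (S × S × A) :=
  {p | (p.2.1, p.1, p.2.2) ∈ E}

/-- Class `K∞` functions. -/
def IsKInf (α : ℝ → ℝ) : Prop :=
  ContinuousOn α (Set.Ici 0) ∧ StrictMonoOn α (Set.Ici 0) ∧ α 0 = 0 ∧
    Tendsto α atTop atTop

/-- Class `KL` functions. -/
def IsKL (β : ℝ → ℝ → ℝ) : Prop :=
  ContinuousOn (fun p : ℝ × ℝ => β p.1 p.2) (Set.Ici 0 ×ˢ Set.Ici 0) ∧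
  (∀ s, 0 ≤ s → ContinuousOn (fun r => β r s) (Set.Ici 0) ∧
      StrictMonoOn (fun r => β r s) (Set.Ici 0) ∧ β 0 s = 0) ∧
  (∀ r, 0 ≤ r → AntitoneOn (fun s => β r s) (Set.Ici 0) ∧
      Tendsto (fun s => β r s) atTop (nhds 0))

/-- The solution map `Φ(k, x₀, z)` of the system `x(k+1) = f(x(k), σ^k z)`. -/
def sol {n : ℕ} (f : (Fin n → ℝ) → (ℤ → A) → Fin n → ℝ) (x0 : Fin n → ℝ) (z : ℤ → A) :
    ℕ → Fin n → ℝ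
  | 0 => x0
  | k + 1 => f (sol f x0 z k) (shiftMap^[k] z)

end Defs

/-!
Write `Φₖ(z)` for the transition matrices. In the Loewner order, stability with rate `r` means
`Φₖ* Φₖ ≤ K r^{2k}` for some constant `K`, the sup norm and the Euclidean norm being equivalent.

Given `Q`, induction on `k` yields `Φₖ* (Q ∘ σᵏ) Φₖ ≤ r^{2k} Q`, and the bounds on `Q` remove it
from this inequality. Conversely, let the system be stable with some rate `g < r`, and put
`Q = ∑_{k < N} r^{-2k} Φₖ* Φₖ`. By telescoping, `r² Q - A* (Q ∘ σ) A = r² (1 - r^{-2N} Φ_N* Φ_N)`,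
which is at least `r² (1 - K (g / r)^{2N})`, hence positive definite for large `N`.
-/

section Cocycle

variable {Ω M : Type*} [Monoid M]

/-- The cocycle over `T : Ω → Ω` generated by `A`: the product
`A (T^[k-1] ω) * ⋯ * A (T ω) * A ω`, which for matrices is the transition matrix of
`x (k+1) = A (T^[k] ω) x (k)`. -/
def linearCocycle (T : Ω → Ω) (A : Ω → M) : ℕ → Ω → M
  | 0, _ => 1
  | k + 1, ω => A (T^[k] ω) * linearCocycle T A k ω

lemma linearCocycle_succ' (T : Ω → Ω) (A : Ω → M) (k : ℕ) (ω : Ω) :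
    linearCocycle T A (k + 1) ω = linearCocycle T A k (T ω) * A ω := by
  induction k with
  | zero => simp only [linearCocycle, Function.iterate_zero, id_eq, mul_one, one_mul]
  | succ k ih => rw [linearCocycle, ih, linearCocycle, Function.iterate_succ_apply, mul_assoc]

end Cocycle

section StarAlgebra

variable {Ω R : Type*} [Ring R] [StarRing R] [Algebra ℝ R] {T : Ω → Ω} {A Q : Ω → R} {Z : Set Ω}

/-- The sum of the first `N` terms of `∑ c ^ k • Φₖ* Φₖ`, where `Φₖ` is the cocycle generated by
`A`. For `N = ∞` and `c = r⁻¹` it would solve the Lyapunov equation `r • Q - A* (Q ∘ T) A = r • 1`;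
truncating it avoids convergence questions. -/
noncomputable def lyapunovSum (T : Ω → Ω) (A : Ω → R) (c : ℝ) (N : ℕ) (ω : Ω) : R :=
  ∑ k ∈ Finset.range N, c ^ k • (star (linearCocycle T A k ω) * linearCocycle T A k ω)

lemma lyapunovSum_sub_smul_conjugate (T : Ω → Ω) (A : Ω → R) (c : ℝ) (N : ℕ) (ω : Ω) :
    lyapunovSum T A c N ω - c • (star (A ω) * lyapunovSum T A c N (T ω) * A ω) =
      1 - c ^ N • (star (linearCocycle T A N ω) * linearCocycle T A N ω) := by
  let summand (k : ℕ) : R := c ^ k • (star (linearCocycle T A k ω) * linearCocycle T A k ω)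
  have shifted : c • (star (A ω) * lyapunovSum T A c N (T ω) * A ω) =
      ∑ k ∈ Finset.range N, summand (k + 1) := by
    simp only [lyapunovSum, summand, Finset.mul_sum, Finset.sum_mul, Finset.smul_sum,
      linearCocycle_succ', star_mul, mul_smul_comm, smul_mul_assoc, smul_smul, pow_succ',
      mul_assoc]
  calc _ = ∑ k ∈ Finset.range N, (summand k - summand (k + 1)) := by
        rw [shifted, lyapunovSum, Finset.sum_sub_distrib]
    _ = summand 0 - summand N := Finset.sum_range_sub' summand N
    _ = _ := by simp only [summand, linearCocycle, pow_zero, one_smul, star_one, mul_one]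

variable [PartialOrder R] [StarOrderedRing R] [StarModule ℝ R]

lemma conjugate_linearCocycle_le {c : ℝ} (hc : 0 ≤ c) (hT : MapsTo T Z Z)
    (hQ : ∀ ω ∈ Z, star (A ω) * Q (T ω) * A ω ≤ c • Q ω) (k : ℕ) {ω : Ω} (hω : ω ∈ Z) :
    star (linearCocycle T A k ω) * Q (T^[k] ω) * linearCocycle T A k ω ≤ c ^ k • Q ω := by
  induction k generalizing ω with
  | zero => simp only [linearCocycle, Function.iterate_zero, id_eq, star_one, one_mul, mul_one,
      pow_zero, one_smul, le_refl]
  | succ k ih =>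
    calc star (linearCocycle T A (k + 1) ω) * Q (T^[k + 1] ω) * linearCocycle T A (k + 1) ω
        = star (A ω) * (star (linearCocycle T A k (T ω)) * Q (T^[k] (T ω)) *
            linearCocycle T A k (T ω)) * A ω := by
          simp only [linearCocycle_succ', Function.iterate_succ_apply, star_mul, mul_assoc]
      _ ≤ star (A ω) * (c ^ k • Q (T ω)) * A ω :=
          star_left_conjugate_le_conjugate (ih (hT hω)) _
      _ = c ^ k • (star (A ω) * Q (T ω) * A ω) := by rw [mul_smul_comm, smul_mul_assoc]
      _ ≤ c ^ k • c • Q ω := by gcongr; exact hQ ω hω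
      _ = c ^ (k + 1) • Q ω := by rw [smul_smul, pow_succ]

lemma star_linearCocycle_mul_self_le {c M₁ M₂ : ℝ} (hc : 0 ≤ c) (hM₁ : 0 < M₁)
    (hT : MapsTo T Z Z) (hQ : ∀ ω ∈ Z, M₁ • 1 ≤ Q ω ∧ Q ω ≤ M₂ • 1)
    (hAQ : ∀ ω ∈ Z, star (A ω) * Q (T ω) * A ω ≤ c • Q ω) (k : ℕ) {ω : Ω} (hω : ω ∈ Z) :
    star (linearCocycle T A k ω) * linearCocycle T A k ω ≤ (M₂ / M₁ * c ^ k) • (1 : R) := by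
  set Φ := linearCocycle T A k ω
  have scaled : M₁ • (star Φ * Φ) ≤ (c ^ k * M₂) • (1 : R) :=
    calc M₁ • (star Φ * Φ) = star Φ * (M₁ • 1) * Φ := by
          rw [mul_smul_comm, smul_mul_assoc, mul_one]
      _ ≤ star Φ * Q (T^[k] ω) * Φ :=
          star_left_conjugate_le_conjugate (hQ _ (hT.iterate k hω)).1 _
      _ ≤ c ^ k • Q ω := conjugate_linearCocycle_le hc hT hAQ k hω
      _ ≤ c ^ k • M₂ • 1 := by gcongr; exact (hQ ω hω).2
      _ = (c ^ k * M₂) • 1 := smul_smul ..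
  calc star Φ * Φ = M₁⁻¹ • M₁ • (star Φ * Φ) := (inv_smul_smul₀ hM₁.ne' _).symm
    _ ≤ M₁⁻¹ • (c ^ k * M₂) • 1 := by gcongr
    _ = (M₂ / M₁ * c ^ k) • 1 := by rw [smul_smul]; congr 1; ring

lemma one_le_lyapunovSum (T : Ω → Ω) (A : Ω → R) {c : ℝ} (hc : 0 ≤ c) {N : ℕ} (hN : 0 < N)
    (ω : Ω) : 1 ≤ lyapunovSum T A c N ω := by
  calc (1 : R) = c ^ 0 • (star (linearCocycle T A 0 ω) * linearCocycle T A 0 ω) := by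
        simp only [linearCocycle, pow_zero, one_smul, star_one, mul_one]
    _ ≤ lyapunovSum T A c N ω := Finset.single_le_sum
        (f := fun k => c ^ k • (star (linearCocycle T A k ω) * linearCocycle T A k ω))
        (fun k _ => smul_nonneg (pow_nonneg hc k) (star_mul_self_nonneg _)) (Finset.mem_range.2 hN)

lemma lyapunovSum_le {c : ℝ} (hc : 0 ≤ c) {b : ℕ → ℝ} {ω : Ω}
    (hb : ∀ k, star (linearCocycle T A k ω) * linearCocycle T A k ω ≤ b k • (1 : R)) (N : ℕ) :
    lyapunovSum T A c N ω ≤ (∑ k ∈ Finset.range N, c ^ k * b k) • 1 := by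
  simp only [lyapunovSum, Finset.sum_smul, mul_smul]
  gcongr with k
  exact hb k

lemma exists_lyapunov_of_star_linearCocycle_mul_self_le {K g r : ℝ} (hK : 0 ≤ K) (hg : 0 ≤ g)
    (hgr : g < r) (hA : ∀ k, ∀ ω ∈ Z,
      star (linearCocycle T A k ω) * linearCocycle T A k ω ≤ (K * g ^ k) • (1 : R)) :
    ∃ M₂ > (0 : ℝ), ∃ δ > (0 : ℝ), ∃ Q : Ω → R, ∀ ω ∈ Z, 1 ≤ Q ω ∧ Q ω ≤ M₂ • 1 ∧
      δ • 1 ≤ r • Q ω - star (A ω) * Q (T ω) * A ω := by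
  have hr : 0 < r := hg.trans_lt hgr
  obtain ⟨N, hKN, hN⟩ : ∃ N : ℕ, K * (g / r) ^ N < 1 ∧ 0 < N := by
    have lim := (tendsto_pow_atTop_nhds_zero_of_lt_one (by positivity)
      ((div_lt_one hr).2 hgr)).const_mul K
    rw [mul_zero] at lim
    exact ((lim.eventually_lt_const one_pos).and (eventually_gt_atTop 0)).exists
  refine ⟨1 + ∑ k ∈ Finset.range N, r⁻¹ ^ k * (K * g ^ k), by positivity,
    r * (1 - K * (g / r) ^ N), mul_pos hr (sub_pos.2 hKN), lyapunovSum T A r⁻¹ N,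
    fun ω hω => ⟨one_le_lyapunovSum T A (by positivity) hN ω, ?_, ?_⟩⟩
  · refine (lyapunovSum_le (by positivity) (fun k => hA k ω hω) N).trans ?_
    exact smul_le_smul_of_nonneg_right (le_add_of_nonneg_left zero_le_one) zero_le_one
  · set Φ := linearCocycle T A N ω
    calc (r * (1 - K * (g / r) ^ N)) • (1 : R) = r • (1 - r⁻¹ ^ N • (K * g ^ N) • 1) := by
          rw [smul_smul, mul_smul, sub_smul, one_smul, div_eq_inv_mul, mul_pow, mul_left_comm]
      _ ≤ r • (1 - r⁻¹ ^ N • (star Φ * Φ)) := by gcongr; exact hA N ω hω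
      _ = r • lyapunovSum T A r⁻¹ N ω - star (A ω) * lyapunovSum T A r⁻¹ N (T ω) * A ω := by
          rw [← lyapunovSum_sub_smul_conjugate, smul_sub, smul_inv_smul₀ hr.ne']

end StarAlgebra

section SupNorm

variable {ι E : Type*} [Fintype ι] [SeminormedAddCommGroup E]

lemma sq_norm_le_sum_sq_norm (x : ι → E) : ‖x‖ ^ 2 ≤ ∑ i, ‖x i‖ ^ 2 := by
  have sum_nonneg : 0 ≤ ∑ i, ‖x i‖ ^ 2 := by positivity
  refine (Real.le_sqrt (norm_nonneg x) sum_nonneg).1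
    ((pi_norm_le_iff_of_nonneg (Real.sqrt_nonneg _)).2 fun i => ?_)
  exact Real.le_sqrt_of_sq_le
    (Finset.single_le_sum (f := fun i => ‖x i‖ ^ 2) (fun _ _ => sq_nonneg _) (Finset.mem_univ i))

lemma sum_sq_norm_le_card_mul_sq_norm (x : ι → E) :
    ∑ i, ‖x i‖ ^ 2 ≤ Fintype.card ι * ‖x‖ ^ 2 := by
  calc ∑ i, ‖x i‖ ^ 2 ≤ ∑ _i : ι, ‖x‖ ^ 2 := by gcongr with i; exact norm_le_pi_norm x i
    _ = Fintype.card ι * ‖x‖ ^ 2 := by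
        rw [Finset.sum_const, nsmul_eq_mul, Finset.card_univ]

end SupNorm

section Gram

open scoped ComplexOrder MatrixOrder

variable {𝕜 m n : Type*} [RCLike 𝕜] [Fintype m] [Fintype n]

lemma star_dotProduct_self_eq_sum_sq_norm (x : n → 𝕜) :
    star x ⬝ᵥ x = ((∑ i, ‖x i‖ ^ 2 : ℝ) : 𝕜) := by
  simp only [dotProduct, Pi.star_apply, RCLike.star_def, RCLike.conj_mul, RCLike.ofReal_sum,
    RCLike.ofReal_pow]

variable [DecidableEq n]

lemma conjTranspose_mul_self_le_smul_one_iff {P : Matrix m n 𝕜} {K : ℝ} :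
    Pᴴ * P ≤ K • 1 ↔ ∀ x : n → 𝕜, ∑ i, ‖(P *ᵥ x) i‖ ^ 2 ≤ K * ∑ j, ‖x j‖ ^ 2 := by
  have hermitian : (K • 1 - Pᴴ * P).IsHermitian :=
    IsHermitian.sub (IsSelfAdjoint.smul (.all K) (.one _)) (isHermitian_conjTranspose_mul_self P)
  have form (x : n → 𝕜) : star x ⬝ᵥ (K • 1 - Pᴴ * P) *ᵥ x =
      ((K * ∑ j, ‖x j‖ ^ 2 - ∑ i, ‖(P *ᵥ x) i‖ ^ 2 : ℝ) : 𝕜) := by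
    rw [RCLike.ofReal_sub, RCLike.ofReal_mul, ← star_dotProduct_self_eq_sum_sq_norm,
      ← star_dotProduct_self_eq_sum_sq_norm, sub_mulVec, dotProduct_sub, smul_mulVec, one_mulVec,
      dotProduct_smul, RCLike.real_smul_eq_coe_mul, star_mulVec, ← dotProduct_mulVec,
      mulVec_mulVec]
  simp only [Matrix.le_iff, posSemidef_iff_dotProduct_mulVec, hermitian, true_and, form,
    RCLike.ofReal_nonneg, sub_nonneg]

lemma conjTranspose_mul_self_le_of_norm_mulVec_le {P : Matrix m n 𝕜} {B : ℝ}
    (hP : ∀ x : n → 𝕜, ‖P *ᵥ x‖ ≤ B * ‖x‖) : Pᴴ * P ≤ (Fintype.card m * B ^ 2) • 1 := by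
  refine conjTranspose_mul_self_le_smul_one_iff.2 fun x => ?_
  calc ∑ i, ‖(P *ᵥ x) i‖ ^ 2 ≤ Fintype.card m * ‖P *ᵥ x‖ ^ 2 :=
        sum_sq_norm_le_card_mul_sq_norm _
    _ ≤ Fintype.card m * (B * ‖x‖) ^ 2 := by gcongr; exact hP x
    _ = Fintype.card m * B ^ 2 * ‖x‖ ^ 2 := by ring
    _ ≤ Fintype.card m * B ^ 2 * ∑ j, ‖x j‖ ^ 2 := by gcongr; exact sq_norm_le_sum_sq_norm x

lemma norm_mulVec_le_of_conjTranspose_mul_self_le {P : Matrix m n 𝕜} {K : ℝ} (hK : 0 ≤ K)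
    (hP : Pᴴ * P ≤ K • 1) (x : n → 𝕜) : ‖P *ᵥ x‖ ≤ √(Fintype.card n * K) * ‖x‖ := by
  refine le_of_sq_le_sq ?_ (by positivity)
  calc ‖P *ᵥ x‖ ^ 2 ≤ ∑ i, ‖(P *ᵥ x) i‖ ^ 2 := sq_norm_le_sum_sq_norm _
    _ ≤ K * ∑ j, ‖x j‖ ^ 2 := conjTranspose_mul_self_le_smul_one_iff.1 hP x
    _ ≤ K * (Fintype.card n * ‖x‖ ^ 2) := by gcongr; exact sum_sq_norm_le_card_mul_sq_norm x
    _ = (√(Fintype.card n * K) * ‖x‖) ^ 2 := by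
        rw [mul_pow, Real.sq_sqrt (by positivity)]; ring

end Gram

section Lyapunov

open scoped ComplexOrder MatrixOrder

variable {𝕜 Ω ι : Type*} [RCLike 𝕜] [Fintype ι] [DecidableEq ι] {T : Ω → Ω}
  {A : Ω → Matrix ι ι 𝕜} {Z : Set Ω} {g r : ℝ}

/-- Uniform exponential stability on `Z`, with decay rate `r`, of the linear system
`x (k+1) = A (T^[k] ω) x (k)`. The norm on `ι → 𝕜` is the sup norm. -/
def IsUniformlyExpStable (T : Ω → Ω) (A : Ω → Matrix ι ι 𝕜) (Z : Set Ω) (r : ℝ) : Prop :=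
  ∃ M : ℝ, 0 < M ∧ ∀ (k : ℕ) (x : ι → 𝕜) (ω : Ω), ω ∈ Z →
    ‖linearCocycle T A k ω *ᵥ x‖ ≤ M * r ^ k * ‖x‖

/-- Existence of a Lyapunov certificate on `Z` with rate `r` for `x (k+1) = A (T^[k] ω) x (k)`: a
function `V ω x = xᴴ Q(ω) x`, bounded above and below by multiples of `xᴴ x` uniformly in `ω ∈ Z`,
with `V (T ω) (A ω x) < r ^ 2 * V ω x` for `x ≠ 0`. Here `≤` is the Loewner order. -/
def HasQuadraticLyapunovFunction (T : Ω → Ω) (A : Ω → Matrix ι ι 𝕜) (Z : Set Ω) (r : ℝ) : Prop :=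
  ∃ M₁ M₂ : ℝ, 0 < M₁ ∧ 0 < M₂ ∧ ∃ Q : Ω → Matrix ι ι 𝕜,
    (∀ ω ∈ Z, M₁ • 1 ≤ Q ω ∧ Q ω ≤ M₂ • 1) ∧
    (∀ ω ∈ Z, (r ^ 2 • Q ω - (A ω)ᴴ * Q (T ω) * A ω).PosDef)

lemma isUniformlyExpStable_iff_conjTranspose_mul_self_le (hr : 0 ≤ r) :
    IsUniformlyExpStable T A Z r ↔ ∃ K ≥ (0 : ℝ), ∀ k, ∀ ω ∈ Z,
      (linearCocycle T A k ω)ᴴ * linearCocycle T A k ω ≤ (K * (r ^ 2) ^ k) • 1 := by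
  constructor
  · rintro ⟨M, -, hM⟩
    refine ⟨Fintype.card ι * M ^ 2, by positivity, fun k ω hω => ?_⟩
    convert conjTranspose_mul_self_le_of_norm_mulVec_le fun x => hM k x ω hω using 2
    ring
  · rintro ⟨K, hK, hA⟩
    refine ⟨√(Fintype.card ι * K) + 1, by positivity, fun k x ω hω => ?_⟩
    calc ‖linearCocycle T A k ω *ᵥ x‖
        ≤ √(Fintype.card ι * (K * (r ^ 2) ^ k)) * ‖x‖ :=
          norm_mulVec_le_of_conjTranspose_mul_self_le (by positivity) (hA k ω hω) x
      _ = √(Fintype.card ι * K) * r ^ k * ‖x‖ := by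
          rw [← mul_assoc, pow_right_comm, Real.sqrt_mul (by positivity),
            Real.sqrt_sq (by positivity)]
      _ ≤ (√(Fintype.card ι * K) + 1) * r ^ k * ‖x‖ := by
          gcongr; exact le_add_of_nonneg_right zero_le_one

lemma IsUniformlyExpStable.hasQuadraticLyapunovFunction (h : IsUniformlyExpStable T A Z g)
    (hg : 0 ≤ g) (hgr : g < r) : HasQuadraticLyapunovFunction T A Z r := by
  obtain ⟨K, hK, hA⟩ := (isUniformlyExpStable_iff_conjTranspose_mul_self_le hg).1 h
  obtain ⟨M₂, hM₂, δ, hδ, Q, hQ⟩ := exists_lyapunov_of_star_linearCocycle_mul_self_le hK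
    (sq_nonneg g) (pow_lt_pow_left₀ hgr hg two_ne_zero) hA
  refine ⟨1, M₂, one_pos, hM₂, Q, fun ω hω => ⟨?_, (hQ ω hω).2.1⟩, fun ω hω => ?_⟩
  · rw [one_smul]
    exact (hQ ω hω).1
  · have := (PosDef.one.smul hδ).add_posSemidef (Matrix.le_iff.1 (hQ ω hω).2.2)
    rwa [add_sub_cancel] at this

lemma HasQuadraticLyapunovFunction.isUniformlyExpStable (h : HasQuadraticLyapunovFunction T A Z r)
    (hT : MapsTo T Z Z) (hr : 0 ≤ r) : IsUniformlyExpStable T A Z r := by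
  obtain ⟨M₁, M₂, hM₁, hM₂, Q, hQ, hAQ⟩ := h
  exact (isUniformlyExpStable_iff_conjTranspose_mul_self_le hr).2 ⟨M₂ / M₁, by positivity,
    fun k _ => star_linearCocycle_mul_self_le (sq_nonneg r) hM₁ hT hQ
      (fun ω hω => Matrix.le_iff.2 (hAQ ω hω).posSemidef) k⟩

theorem linear_ues_iff_exists_quadratic_sequence_dependent_lyapunov_general
    (hT : MapsTo T Z Z) {a b : ℝ} (ha : 0 ≤ a) :
    (∀ r ∈ Ioo a b, IsUniformlyExpStable T A Z r) ↔
      ∀ r ∈ Ioo a b, HasQuadraticLyapunovFunction T A Z r := by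
  refine ⟨fun h r hr => ?_, fun h r hr => (h r hr).isUniformlyExpStable hT (ha.trans hr.1.le)⟩
  obtain ⟨g, hag, hgr⟩ := exists_between hr.1
  exact (h g ⟨hag, hgr.trans hr.2⟩).hasQuadraticLyapunovFunction (ha.trans hag.le) hgr

end Lyapunov

section Shift

variable {A : Type*}

lemma IsSofic.mapsTo_shiftMap {Z : Set (ℤ → A)} (hZ : IsSofic Z) : MapsTo shiftMap Z Z := by
  obtain ⟨S, _, E, rfl⟩ := hZ
  rintro z ⟨s, hs⟩
  exact ⟨fun k => s (k + 1), fun k => hs (k + 1)⟩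

lemma sol_mulVec_eq_linearCocycle_mulVec {n : ℕ} (Amap : (ℤ → A) → Matrix (Fin n) (Fin n) ℝ)
    (x₀ : Fin n → ℝ) (z : ℤ → A) (k : ℕ) :
    sol (fun x w => Amap w *ᵥ x) x₀ z k = linearCocycle shiftMap Amap k z *ᵥ x₀ := by
  induction k with
  | zero => simp only [sol, linearCocycle, one_mulVec]
  | succ k ih => simp only [sol, linearCocycle, ih, mulVec_mulVec]

end Shift

/-- Theorem (Converse Lyapunov result, linear case): for a fixed `γ ∈ [0,1)`, the linear
system `x(k+1) = A(σ^k z) x(k)` over the sofic shift `Z` is UES with every decay rate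
`γ̃ ∈ (γ,1)` iff for every `γ̃ ∈ (γ,1)` there is a uniformly bounded sequence-dependent
quadratic Lyapunov certificate `Q : Z → S^n₊`. -/
theorem linear_ues_iff_exists_quadratic_sequence_dependent_lyapunov
    {A : Type*} [Fintype A] {n : ℕ} (Z : Set (ℤ → A)) (hZ : IsSofic Z)
    (Amap : (ℤ → A) → Matrix (Fin n) (Fin n) ℝ) (γ : ℝ) (hγ : γ ∈ Set.Ico (0 : ℝ) 1) :
    (∀ γt ∈ Set.Ioo γ 1, ∃ M : ℝ, 0 < M ∧
      ∀ (k : ℕ) (x0 : Fin n → ℝ) (z : ℤ → A), z ∈ Z →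
        ‖sol (fun x w => (Amap w).mulVec x) x0 z k‖ ≤ M * γt ^ k * ‖x0‖) ↔
    (∀ γt ∈ Set.Ioo γ 1, ∃ M₁ M₂ : ℝ, 0 < M₁ ∧ 0 < M₂ ∧
      ∃ Q : (ℤ → A) → Matrix (Fin n) (Fin n) ℝ,
        (∀ z ∈ Z, (Q z - M₁ • (1 : Matrix (Fin n) (Fin n) ℝ)).PosSemidef ∧
            (M₂ • (1 : Matrix (Fin n) (Fin n) ℝ) - Q z).PosSemidef) ∧
        (∀ z ∈ Z, (γt ^ 2 • Q z - (Amap z)ᵀ * Q (shiftMap z) * Amap z).PosDef)) := by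
  simp only [sol_mulVec_eq_linearCocycle_mulVec, ← conjTranspose_eq_transpose_of_trivial]
  exact linear_ues_iff_exists_quadratic_sequence_dependent_lyapunov_general hZ.mapsTo_shiftMap hγ.1
end

section
/- Let C = {C_1, …, C_K} be a g-covering of a sofic shift Z with presentation G, let f : ℝ^n × Z → ℝ^n, and let W : ℝ^n × C → ℝ be a G-based Lyapunov function for the system x(k+1) = f(x(k), σ^k(z)), with class-K∞ bounds α₁, α₂ and rate γ ∈ [0,1). Then the function V_max : ℝ^n × Z → ℝ defined by V_max(x, z) := max{ W(x, X) : X ∈ C, z ∈ X } is a sequence-dependent Lyapunov function for the system, i.e. α₁(|x|) ≤ V_max(x, z) ≤ α₂(|x|) for all x, z, and V_max(f(x,z), σ(z)) ≤ γ V_max(x, z) for all x ∈ ℝ^n and z ∈ Z. -/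
open Set Filter Matrix

/-!
Walks are bi-infinite, so a walk labeled by `σ z` that is at node `t` at time `0` is the shift of a
walk labeled by `z`: it came to `t` along an edge labeled `z 0`, from a node `s` with
`z ∈ Z(G, s)`. Hence every value `W (f x z) t` competing in `V_max (f x z) (σ z)` is at most
`γ * W x s` for some `W x s` competing in `V_max x z`.
-/

section Walks

variable {A S : Type*} {E : Set (S × S × A)} {z : ℤ → A}

theorem shiftMap_surjective : Function.Surjective (shiftMap : (ℤ → A) → ℤ → A) := fun z =>
  ⟨fun k => z (k - 1), funext fun k => congrArg z (add_sub_cancel_right k 1)⟩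

theorem isLabeledWalk_shiftMap_iff {s : ℤ → S} :
    IsLabeledWalk E (shiftMap z) (shiftMap s) ↔ IsLabeledWalk E z s :=
  (Equiv.addRight (1 : ℤ)).forall_congr_right (q := fun k => (s k, s (k + 1), z k) ∈ E)

theorem mem_graphLang_iff_exists_mem_graphLangAt :
    z ∈ graphLang E ↔ ∃ t, z ∈ graphLangAt E t :=
  ⟨fun ⟨s, hs⟩ => ⟨s 0, s, hs, rfl⟩, fun ⟨_, s, hs, _⟩ => ⟨s, hs⟩⟩

theorem shiftMap_mem_graphLang (hz : z ∈ graphLang E) : shiftMap z ∈ graphLang E :=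
  let ⟨s, hs⟩ := hz
  ⟨shiftMap s, isLabeledWalk_shiftMap_iff.2 hs⟩

theorem exists_edge_of_shiftMap_mem_graphLangAt {t : S} (hz : shiftMap z ∈ graphLangAt E t) :
    ∃ s, (s, t, z 0) ∈ E ∧ z ∈ graphLangAt E s := by
  obtain ⟨walk, hwalk, rfl⟩ := hz
  obtain ⟨past, rfl⟩ := shiftMap_surjective walk
  have hpast : IsLabeledWalk E z past := isLabeledWalk_shiftMap_iff.1 hwalk
  exact ⟨past 0, hpast 0, past, hpast, rfl⟩

end Walks

section CoverSup

variable {ι Y R : Type*}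

/-- The supremum of the weights `w j` over the members `C j` of a family of sets that contain `y`.
With `w = W x`, this is `V_max (x, y)`; the maximum of the paper is encoded as a supremum, which
is meaningful when `w` is bounded above and some `C j` contains `y`. -/
def coverSup [SupSet R] (C : ι → Set Y) (w : ι → R) (y : Y) : R :=
  sSup {r | ∃ j, y ∈ C j ∧ r = w j}

variable [ConditionallyCompleteLattice R] {C : ι → Set Y} {w : ι → R} {y : Y}

theorem le_coverSup (hw : BddAbove (range w)) {j : ι} (hj : y ∈ C j) : w j ≤ coverSup C w y := by
  refine le_csSup (hw.mono ?_) ⟨j, hj, rfl⟩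
  rintro _ ⟨i, -, rfl⟩
  exact mem_range_self i

theorem coverSup_le (hy : ∃ j, y ∈ C j) {c : R} (hc : ∀ j, y ∈ C j → w j ≤ c) :
    coverSup C w y ≤ c := by
  obtain ⟨i, hi⟩ := hy
  refine csSup_le ⟨w i, i, hi, rfl⟩ ?_
  rintro _ ⟨j, hj, rfl⟩
  exact hc j hj

end CoverSup

theorem gBased_lyapunov_max_is_sequence_dependent_lyapunov_general
    {A S X : Type*} {E : Set (S × S × A)} {f : X → (ℤ → A) → X} {W : X → S → ℝ}
    {a b : X → ℝ} {γ : ℝ} (hγ : 0 ≤ γ) (hbd : ∀ x j, a x ≤ W x j ∧ W x j ≤ b x)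
    (hdec : ∀ x j j' z, (j, j', z 0) ∈ E → z ∈ graphLangAt E j → shiftMap z ∈ graphLangAt E j' →
      W (f x z) j' ≤ γ * W x j) :
    (∀ x, ∀ z ∈ graphLang E,
      a x ≤ coverSup (graphLangAt E) (W x) z ∧ coverSup (graphLangAt E) (W x) z ≤ b x) ∧
    ∀ x, ∀ z ∈ graphLang E,
      coverSup (graphLangAt E) (W (f x z)) (shiftMap z) ≤
        γ * coverSup (graphLangAt E) (W x) z := by
  have hW (x : X) : BddAbove (range (W x)) := ⟨b x, forall_mem_range.2 fun j => (hbd x j).2⟩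
  refine ⟨fun x z hz => ?bounds, fun x z hz => ?decrease⟩
  case bounds =>
    have hcover := mem_graphLang_iff_exists_mem_graphLangAt.1 hz
    have ⟨j, hj⟩ := hcover
    exact ⟨(hbd x j).1.trans (le_coverSup (hW x) hj), coverSup_le hcover fun i _ => (hbd x i).2⟩
  case decrease =>
    have hcover := mem_graphLang_iff_exists_mem_graphLangAt.1 (shiftMap_mem_graphLang hz)
    refine coverSup_le hcover fun j' hj' => ?_
    obtain ⟨j, hedge, hj⟩ := exists_edge_of_shiftMap_mem_graphLangAt hj'
    calc W (f x z) j' ≤ γ * W x j := hdec x j j' z hedge hj hj'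
      _ ≤ γ * coverSup (graphLangAt E) (W x) z :=
        mul_le_mul_of_nonneg_left (le_coverSup (hW x) hj) hγ

/-- Theorem: if `W` is a `G`-based Lyapunov function for the system `x(k+1) = f(x(k), σ^k z)`
(with g-covering `C` presented by the graph with edge set `E`), then
`V_max(x, z) = max { W(x, X) : X ∈ C, z ∈ X }` is a sequence-dependent Lyapunov function. -/
theorem gBased_lyapunov_max_is_sequence_dependent_lyapunov
    {A : Type*} [Fintype A] {n K : ℕ} (Z : Set (ℤ → A))
    (C : Fin K → Set (ℤ → A)) (E : Set (Fin K × Fin K × A))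
    (hpres : IsPresentation E C Z)
    (f : (Fin n → ℝ) → (ℤ → A) → Fin n → ℝ)
    (W : (Fin n → ℝ) → Fin K → ℝ) (α₁ α₂ : ℝ → ℝ) (γ : ℝ)
    (hα₁ : IsKInf α₁) (hα₂ : IsKInf α₂) (hγ : γ ∈ Set.Ico (0 : ℝ) 1)
    (hbd : ∀ (x : Fin n → ℝ) (j : Fin K), α₁ ‖x‖ ≤ W x j ∧ W x j ≤ α₂ ‖x‖)
    (hdec : ∀ (x : Fin n → ℝ) (j j' : Fin K) (i : A) (z : ℤ → A),
      (j, j', i) ∈ E → z ∈ C j → z 0 = i → shiftMap z ∈ C j' →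
      W (f x z) j' ≤ γ * W x j) :
    (∀ (x : Fin n → ℝ) (z : ℤ → A), z ∈ Z →
      α₁ ‖x‖ ≤ sSup {r : ℝ | ∃ j : Fin K, z ∈ C j ∧ r = W x j} ∧
      sSup {r : ℝ | ∃ j : Fin K, z ∈ C j ∧ r = W x j} ≤ α₂ ‖x‖) ∧
    (∀ (x : Fin n → ℝ) (z : ℤ → A), z ∈ Z →
      sSup {r : ℝ | ∃ j : Fin K, shiftMap z ∈ C j ∧ r = W (f x z) j} ≤
        γ * sSup {r : ℝ | ∃ j : Fin K, z ∈ C j ∧ r = W x j}) := by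
  obtain ⟨rfl, hC⟩ := hpres
  obtain rfl : C = graphLangAt E := funext hC
  exact gBased_lyapunov_max_is_sequence_dependent_lyapunov_general hγ.1 hbd
    fun x j j' z hedge hj hj' => hdec x j j' (z 0) z hedge hj rfl hj'
end
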